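/- arXiv:1001.2209 — 2 statements merged into one kernel-verified Lean document; each statement's English description precedes it below -/
import Mathlib

section
/- Let n ≥ 1 and let C be an additive subgroup of (Z_4)^n of cardinality 4^{k_1}·2^{k_2} such that every nonzero element of C has Lee weight at least d, where d ≥ 3. Then there exists a (d−1)-distance coloring of V_{2n} with 2^{2n − 2k_1 − k_2} colors; in particular χ'_{d−1}(2n) ≤ 2^{2n − 2k_1 − k_2}. -/
/-!
The Gray map is a bijective isometry from `(ZMod 4)^n`, with the Lee distance, to `V (2 * n)`, with
the Hamming distance. Color a binary word by the coset of `C` containing its Gray preimage. Two words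
of the same color have Gray preimages differing by an element of `C`, so they are equal or at
Hamming distance at least `d` (`leeWtVec_grayInv_sub`). The number of cosets is
`4 ^ n / (4 ^ k₁ * 2 ^ k₂) = 2 ^ (2 * n - 2 * k₁ - k₂)` (`card_quotient`).
-/

/-- `V n` is the set of binary words of length `n`. -/
abbrev V (n : ℕ) := Fin n → ZMod 2

/-- A `d`-distance coloring of `V n` with `L` colors. -/
def IsDistColoring (n d L : ℕ) (Γ : V n → Fin L) : Prop :=
  ∀ u v : V n, u ≠ v → hammingDist u v ≤ d → Γ u ≠ Γ v

/-- `chi' d n` is the minimum number of colors of a `d`-distance coloring of `V n`. -/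
noncomputable def chi' (d n : ℕ) : ℕ :=
  sInf {L : ℕ | ∃ Γ : V n → Fin L, IsDistColoring n d L Γ}

/-- An exactly `d`-distance coloring of `V n` with `L` colors. -/
def IsExactColoring (n d L : ℕ) (Γ : V n → Fin L) : Prop :=
  ∀ u v : V n, hammingDist u v = d → Γ u ≠ Γ v

/-- `chi d n` is the minimum number of colors of an exactly `d`-distance coloring of `V n`. -/
noncomputable def chi (d n : ℕ) : ℕ :=
  sInf {L : ℕ | ∃ Γ : V n → Fin L, IsExactColoring n d L Γ}

/-- `kdist n d` is the maximum dimension of a linear subspace of `V n` in which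
every nonzero element has Hamming weight at least `d`. -/
noncomputable def kdist (n d : ℕ) : ℕ :=
  sSup {k : ℕ | ∃ C : Submodule (ZMod 2) (V n),
    Module.finrank (ZMod 2) C = k ∧ ∀ c ∈ C, c ≠ 0 → d ≤ hammingNorm c}

/-- `kbar n d` is the maximum dimension of a linear subspace of `V n` in which
no nonzero element has Hamming weight exactly `d`. -/
noncomputable def kbar (n d : ℕ) : ℕ :=
  sSup {k : ℕ | ∃ C : Submodule (ZMod 2) (V n),
    Module.finrank (ZMod 2) C = k ∧ ∀ c ∈ C, c ≠ 0 → hammingNorm c ≠ d}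

/-- `Acode n d` is the maximum size of a binary code of length `n` and minimum distance ≥ `d`. -/
noncomputable def Acode (n d : ℕ) : ℕ :=
  sSup {m : ℕ | ∃ C : Finset (V n), C.card = m ∧
    ∀ a ∈ C, ∀ b ∈ C, a ≠ b → d ≤ hammingDist a b}

/-- `Qcode n d` is the maximum size of a binary `(n, {d̄})` forbidden distance code. -/
noncomputable def Qcode (n d : ℕ) : ℕ :=
  sSup {m : ℕ | ∃ C : Finset (V n), C.card = m ∧
    ∀ a ∈ C, ∀ b ∈ C, a ≠ b → hammingDist a b ≠ d}

/-- The Lee weight on `ZMod 4`: 0 ↦ 0, 1 ↦ 1, 2 ↦ 2, 3 ↦ 1. -/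
def leeWt (x : ZMod 4) : ℕ := min x.val (4 - x.val)

/-- The Lee weight of a vector in `(ZMod 4)^n`. -/
def leeWtVec {n : ℕ} (x : Fin n → ZMod 4) : ℕ := ∑ i, leeWt (x i)

/-- The Lee distance on `(ZMod 4)^n`. -/
def leeDist {n : ℕ} (x y : Fin n → ZMod 4) : ℕ := leeWtVec (x - y)

/-- The Gray map `ZMod 4 → (ZMod 2)^2`: 0 ↦ 00, 1 ↦ 01, 2 ↦ 11, 3 ↦ 10. -/
def gray (x : ZMod 4) : Fin 2 → ZMod 2 :=
  ![if 2 ≤ x.val then 1 else 0, if x.val = 1 ∨ x.val = 2 then 1 else 0]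

/-- The Gray map extended coordinatewise to `(ZMod 4)^n → (ZMod 2)^{2n}`. -/
def grayMap {n : ℕ} (x : Fin n → ZMod 4) : V (2 * n) :=
  fun j => gray (x ⟨j.val / 2, by have := j.isLt; omega⟩) ⟨j.val % 2, by omega⟩

/-- The inverse of the Gray map on one pair of bits: 00 ↦ 0, 01 ↦ 1, 11 ↦ 2, 10 ↦ 3. -/
def bitsToZ4 (a b : ZMod 2) : ZMod 4 :=
  if a = 0 then (if b = 0 then 0 else 1) else (if b = 0 then 3 else 2)

/-- The inverse Gray map `V (2 * n) → (ZMod 4)^n`, up to a permutation of the binary coordinates: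
the bits at positions `i` and `n + i` (rather than `2 * i` and `2 * i + 1`) are paired, which does
not affect Hamming distances. -/
def grayInv {n : ℕ} (v : V (2 * n)) : Fin n → ZMod 4 :=
  fun i => bitsToZ4 (v (finProdFinEquiv (0, i))) (v (finProdFinEquiv (1, i)))

lemma leeWt_bitsToZ4_sub : ∀ a b a' b' : ZMod 2,
    leeWt (bitsToZ4 a b - bitsToZ4 a' b') =
      (if a ≠ a' then 1 else 0) + (if b ≠ b' then 1 else 0) := by
  decide

/-- The inverse Gray map is an isometry from the Hamming distance to the Lee distance. -/
lemma leeWtVec_grayInv_sub {n : ℕ} (u v : V (2 * n)) :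
    leeWtVec (grayInv u - grayInv v) = hammingDist u v := by
  rw [hammingDist, Finset.card_filter, ← finProdFinEquiv.sum_comp, Fintype.sum_prod_type,
    Fin.sum_univ_two, ← Finset.sum_add_distrib]
  exact Finset.sum_congr rfl fun i _ => leeWt_bitsToZ4_sub _ _ _ _

lemma card_quotient {n k₁ k₂ : ℕ} (C : AddSubgroup (Fin n → ZMod 4))
    (hcard : Nat.card C = 4 ^ k₁ * 2 ^ k₂) :
    Nat.card ((Fin n → ZMod 4) ⧸ C) = 2 ^ (2 * n - 2 * k₁ - k₂) := by
  have h := C.card_eq_card_quotient_mul_card_addSubgroup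
  have hpow : (4 : ℕ) ^ k₁ * 2 ^ k₂ = 2 ^ (2 * k₁ + k₂) := by
    rw [pow_add, pow_mul]
    norm_num
  have hn : Nat.card (Fin n → ZMod 4) = 2 ^ (2 * n) := by
    rw [Nat.card_eq_fintype_card, Fintype.card_fun, ZMod.card, Fintype.card_fin, pow_mul]
    norm_num
  rw [hcard, hpow, hn] at h
  -- Lagrange bounds the exponent, so the truncated subtractions are genuine.
  have hle : 2 * k₁ + k₂ ≤ 2 * n :=
    (Nat.pow_dvd_pow_iff_le_right (by norm_num)).1 (Dvd.intro_left _ h.symm)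
  refine Nat.eq_of_mul_eq_mul_right (pow_pos (by norm_num : 0 < 2) (2 * k₁ + k₂)) ?_
  rw [← h, ← pow_add]
  congr 1
  omega

/-- A `Z₄`-linear code of length `n`, size `4^{k₁}·2^{k₂}` and minimum Lee weight at
least `d ≥ 3` yields a `(d−1)`-distance coloring of `V (2n)` with `2^{2n−2k₁−k₂}` colors. -/
theorem coloring_of_Z4_code (n k₁ k₂ d : ℕ) (hn : 1 ≤ n) (hd : 3 ≤ d)
    (C : AddSubgroup (Fin n → ZMod 4)) (hcard : Nat.card C = 4 ^ k₁ * 2 ^ k₂)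
    (hLee : ∀ x ∈ C, x ≠ 0 → d ≤ leeWtVec x) :
    (∃ Γ : V (2 * n) → Fin (2 ^ (2 * n - 2 * k₁ - k₂)),
        IsDistColoring (2 * n) (d - 1) (2 ^ (2 * n - 2 * k₁ - k₂)) Γ) ∧
      chi' (d - 1) (2 * n) ≤ 2 ^ (2 * n - 2 * k₁ - k₂) := by
  have key : ∃ Γ : V (2 * n) → Fin (2 ^ (2 * n - 2 * k₁ - k₂)),
      IsDistColoring (2 * n) (d - 1) (2 ^ (2 * n - 2 * k₁ - k₂)) Γ := by
    let e : ((Fin n → ZMod 4) ⧸ C) ≃ Fin (2 ^ (2 * n - 2 * k₁ - k₂)) :=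
      Finite.equivFinOfCardEq (card_quotient C hcard)
    refine ⟨fun v => e (QuotientAddGroup.mk (grayInv v)), fun u v huv hdist heq => ?_⟩
    have hmem : grayInv v - grayInv u ∈ C := by
      rw [sub_eq_neg_add]
      exact QuotientAddGroup.eq.1 (e.injective heq)
    have hiso := leeWtVec_grayInv_sub v u
    rw [hammingDist_comm] at hiso
    have hpos : 0 < hammingDist u v := hammingDist_pos.2 huv
    have hne : grayInv v - grayInv u ≠ 0 := by
      intro h0
      rw [h0] at hiso
      have hzero : leeWtVec (0 : Fin n → ZMod 4) = 0 := by simp [leeWtVec, leeWt]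
      omega
    have := hLee _ hmem hne
    omega
  exact ⟨key, Nat.sInf_le key⟩
end

section
/- For every even positive integer d and every positive integer n, one has k(n + d − 1, d̄) ≥ k(n, d+1) + d − 1. -/
/-- Concatenation of words, as a linear map. -/
def appendLin (n e : ℕ) : (V n × V e) →ₗ[ZMod 2] V (n + e) where
  toFun p := Fin.append p.1 p.2
  map_add' p q := by
    ext i
    refine Fin.addCases (fun j => ?_) (fun j => ?_) i <;> simp
  map_smul' r p := by
    ext i
    refine Fin.addCases (fun j => ?_) (fun j => ?_) i <;> simp

lemma appendLin_injective (n e : ℕ) : Function.Injective (appendLin n e) := by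
  rintro ⟨a, b⟩ ⟨a', b'⟩ h
  have h' : Fin.append a b = Fin.append a' b' := h
  refine Prod.ext (funext fun j => ?_) (funext fun j => ?_)
  · simpa using congrFun h' (Fin.castAdd e j)
  · simpa using congrFun h' (Fin.natAdd n j)

lemma hammingNorm_appendLin {n e : ℕ} (p : V n × V e) :
    hammingNorm (appendLin n e p) = hammingNorm p.1 + hammingNorm p.2 := by
  simp only [hammingNorm, Finset.card_filter, Fin.sum_univ_add]
  simp [appendLin]

/-- The supremum defining `kdist` is attained; the zero subspace shows that the set of dimensions
is nonempty. -/
lemma exists_finrank_eq_kdist (n d : ℕ) : ∃ C : Submodule (ZMod 2) (V n),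
    Module.finrank (ZMod 2) C = kdist n d ∧ ∀ c ∈ C, c ≠ 0 → d ≤ hammingNorm c := by
  refine Nat.sSup_mem (s := {k : ℕ | ∃ C : Submodule (ZMod 2) (V n),
    Module.finrank (ZMod 2) C = k ∧ ∀ c ∈ C, c ≠ 0 → d ≤ hammingNorm c}) ?_ ?_
  · exact ⟨0, ⊥, by simp, fun c hc h => absurd ((Submodule.mem_bot _).1 hc) h⟩
  · refine ⟨n, ?_⟩
    rintro k ⟨C, rfl, -⟩
    simpa using C.finrank_le

lemma finrank_le_kbar {n d : ℕ} (C : Submodule (ZMod 2) (V n))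
    (hC : ∀ c ∈ C, c ≠ 0 → hammingNorm c ≠ d) : Module.finrank (ZMod 2) C ≤ kbar n d := by
  refine le_csSup ⟨n, ?_⟩ ⟨C, rfl, hC⟩
  rintro k ⟨C, rfl, -⟩
  simpa using C.finrank_le

/-- For even positive `d` and positive `n`, `k(n + d − 1, d̄) ≥ k(n, d+1) + d − 1`. -/
theorem kbar_add_d_sub_one_ge (d n : ℕ) (hd : Even d) (hd0 : 0 < d) (hn : 0 < n) :
    kdist n (d + 1) + (d - 1) ≤ kbar (n + d - 1) d := by
  obtain ⟨e, rfl⟩ : ∃ e, d = e + 1 := ⟨d - 1, by omega⟩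
  obtain ⟨C, hk, hC⟩ := exists_finrank_eq_kdist n (e + 1 + 1)
  let f : (C × V e) →ₗ[ZMod 2] V (n + e) :=
    appendLin n e ∘ₗ LinearMap.prodMap C.subtype LinearMap.id
  have hf : Function.Injective f :=
    (appendLin_injective n e).comp (C.injective_subtype.prodMap Function.injective_id)
  have hr : Module.finrank (ZMod 2) (LinearMap.range f) = kdist n (e + 1 + 1) + e := by
    rw [LinearMap.finrank_range_of_inj hf, Module.finrank_prod, hk]
    simp
  change kdist n (e + 1 + 1) + e ≤ kbar (n + e) (e + 1)
  rw [← hr]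
  refine finrank_le_kbar _ ?_
  rintro _ ⟨⟨⟨c, hc⟩, w⟩, rfl⟩ -
  have hw : hammingNorm (f (⟨c, hc⟩, w)) = hammingNorm c + hammingNorm w :=
    hammingNorm_appendLin (c, w)
  rw [hw]
  by_cases h0 : c = 0
  · have hle : hammingNorm w ≤ e := by simpa using hammingNorm_le_card_fintype (x := w)
    simp only [h0, hammingNorm_zero]
    omega
  · have := hC c hc h0
    omega
end
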